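/- Let (X, Y) be a bivariate Gaussian random vector with mean zero, unit variances, and correlation ρ ∈ [-1, 1]. Then P(XY < 0) = arccos(ρ)/π. -/

import Mathlib

open MeasureTheory ProbabilityTheory Real

/-!
Write `(X, Y)` as `(U, cos θ * U + sin θ * V)` with `θ = arccos ρ` and `U`, `V` independent standard
Gaussian variables; by the Cramér–Wold theorem this is the only law with the prescribed linear
forms. In polar coordinates `U = r cos φ` and `Y = r cos (φ - θ)`, and the angle `φ` is uniform on
`(-π, π)` because the law of `(U, V)` is rotation invariant. Hence `0 < X` and `Y < 0` exactly when
`-π / 2 < φ < θ - π / 2`, an event of probability `θ / (2 * π)`. The opposite quadrant has the same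
probability by the symmetry `(X, Y) ↦ (-X, -Y)`.
-/

open scoped ENNReal NNReal

section CramerWold

theorem measure_ext_of_map_strongDual {E : Type*} [NormedAddCommGroup E] [NormedSpace ℝ E]
    [CompleteSpace E] [SecondCountableTopology E] [MeasurableSpace E] [BorelSpace E]
    {μ ν : Measure E} [IsFiniteMeasure μ] [IsFiniteMeasure ν]
    (h : ∀ L : StrongDual ℝ E, μ.map L = ν.map L) : μ = ν :=
  Measure.ext_of_charFunDual <| funext fun L => by
    rw [charFunDual_eq_charFun_map_one, charFunDual_eq_charFun_map_one, h]

theorem measure_prod_ext_of_map_linear {μ ν : Measure (ℝ × ℝ)} [IsFiniteMeasure μ]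
    [IsFiniteMeasure ν]
    (h : ∀ a b : ℝ, μ.map (fun p => a * p.1 + b * p.2) = ν.map (fun p => a * p.1 + b * p.2)) :
    μ = ν := by
  refine measure_ext_of_map_strongDual fun L => ?_
  have hL : (L : ℝ × ℝ → ℝ) = fun p => L (1, 0) * p.1 + L (0, 1) * p.2 := by
    funext p
    calc L p = L (p.1 • (1, 0) + p.2 • (0, 1)) := by simp
      _ = L (1, 0) * p.1 + L (0, 1) * p.2 := by
        rw [map_add, map_smul, map_smul, smul_eq_mul, smul_eq_mul, mul_comm, mul_comm p.2]
  rw [hL, h]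

end CramerWold

theorem map_linear_gaussianReal_prod (m₁ m₂ : ℝ) (v₁ v₂ : ℝ≥0) (a b : ℝ) :
    ((gaussianReal m₁ v₁).prod (gaussianReal m₂ v₂)).map (fun p => a * p.1 + b * p.2) =
      gaussianReal (a * m₁ + b * m₂) (a ^ 2 * v₁ + b ^ 2 * v₂).toNNReal := by
  have hconv : ((gaussianReal m₁ v₁).prod (gaussianReal m₂ v₂)).map (fun p => a * p.1 + b * p.2) =
      (gaussianReal m₁ v₁).map (a * ·) ∗ (gaussianReal m₂ v₂).map (b * ·) := by
    rw [Measure.conv, Measure.map_prod_map _ _ (by fun_prop) (by fun_prop),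
      Measure.map_map (by fun_prop) (by fun_prop)]
    rfl
  rw [hconv, gaussianReal_map_const_mul, gaussianReal_map_const_mul, gaussianReal_conv_gaussianReal]
  congr 1
  exact NNReal.eq (Real.coe_toNNReal _ (by positivity)).symm

section Bivariate

/-- The centred Gaussian law on the plane with unit variances and correlation `ρ ∈ [-1, 1]`,
realized as the law of `(U, ρ * U + √(1 - ρ ^ 2) * V)` for independent standard Gaussian variables
`U` and `V`, so that the degenerate cases `ρ = 1` and `ρ = -1` are included. -/
noncomputable def stdBivariateGaussian (ρ : ℝ) : Measure (ℝ × ℝ) :=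
  ((gaussianReal 0 1).prod (gaussianReal 0 1)).map fun p => (p.1, ρ * p.1 + √(1 - ρ ^ 2) * p.2)

instance (ρ : ℝ) : IsProbabilityMeasure (stdBivariateGaussian ρ) :=
  Measure.isProbabilityMeasure_map (by fun_prop)

theorem map_linear_stdBivariateGaussian {ρ : ℝ} (hρ : ρ ∈ Set.Icc (-1) 1) (a b : ℝ) :
    (stdBivariateGaussian ρ).map (fun p => a * p.1 + b * p.2) =
      gaussianReal 0 (a ^ 2 + 2 * a * b * ρ + b ^ 2).toNNReal := by
  have hlin : (fun p : ℝ × ℝ => a * p.1 + b * p.2) ∘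
      (fun p : ℝ × ℝ => (p.1, ρ * p.1 + √(1 - ρ ^ 2) * p.2)) =
      fun p => (a + b * ρ) * p.1 + b * √(1 - ρ ^ 2) * p.2 := by
    funext p
    simp only [Function.comp_apply]
    ring
  have hsqrt : √(1 - ρ ^ 2) ^ 2 = 1 - ρ ^ 2 := sq_sqrt (by nlinarith [hρ.1, hρ.2])
  rw [stdBivariateGaussian, Measure.map_map (by fun_prop) (by fun_prop), hlin,
    map_linear_gaussianReal_prod, NNReal.coe_one]
  congr 2
  · ring
  · linear_combination b ^ 2 * hsqrt

theorem eq_stdBivariateGaussian_of_map_linear {μ : Measure (ℝ × ℝ)} [IsFiniteMeasure μ] {ρ : ℝ}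
    (hρ : ρ ∈ Set.Icc (-1) 1)
    (h : ∀ a b : ℝ, μ.map (fun p => a * p.1 + b * p.2) =
      gaussianReal 0 (a ^ 2 + 2 * a * b * ρ + b ^ 2).toNNReal) :
    μ = stdBivariateGaussian ρ :=
  measure_prod_ext_of_map_linear fun a b =>
    (h a b).trans (map_linear_stdBivariateGaussian hρ a b).symm

theorem map_neg_stdBivariateGaussian (ρ : ℝ) :
    (stdBivariateGaussian ρ).map (fun p => -p) = stdBivariateGaussian ρ := by
  have hneg : MeasurePreserving (fun x : ℝ => -x) (gaussianReal 0 1) (gaussianReal 0 1) :=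
    ⟨measurable_neg, by rw [gaussianReal_map_neg, neg_zero]⟩
  have hcomm : (fun p : ℝ × ℝ => -p) ∘ (fun p => (p.1, ρ * p.1 + √(1 - ρ ^ 2) * p.2)) =
      (fun p : ℝ × ℝ => (p.1, ρ * p.1 + √(1 - ρ ^ 2) * p.2)) ∘
        Prod.map (fun x => -x) (fun x => -x) := by
    funext p
    ext
    · rfl
    · simp only [Function.comp_apply, Prod.map_fst, Prod.map_snd, Prod.snd_neg]
      ring
  rw [stdBivariateGaussian, Measure.map_map (by fun_prop) (by fun_prop), hcomm,
    ← Measure.map_map (by fun_prop) (by fun_prop), (hneg.prod hneg).map_eq]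

end Bivariate

section RadialDensity

variable {f : ℝ × ℝ → ℝ≥0∞} {g : ℝ → ℝ≥0∞} {A : Set (ℝ × ℝ)} {S : Set ℝ}

theorem withDensity_radial_cone_eq_mul (hg : Measurable g)
    (hf : ∀ p ∈ polarCoord.target, f (polarCoord.symm p) = g p.1)
    (hA : MeasurableSet A) (hS : MeasurableSet S)
    (hAS : ∀ p ∈ polarCoord.target, polarCoord.symm p ∈ A ↔ p.2 ∈ S) :
    volume.withDensity f A =
      (∫⁻ r in Set.Ioi 0, ENNReal.ofReal r * g r) * volume (S ∩ Set.Ioo (-π) π) := by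
  have hpolar : ∀ p ∈ polarCoord.target, ENNReal.ofReal p.1 • A.indicator f (polarCoord.symm p) =
      ENNReal.ofReal p.1 * g p.1 * S.indicator 1 p.2 := by
    intro p hp
    by_cases hpS : p.2 ∈ S
    · rw [Set.indicator_of_mem ((hAS p hp).2 hpS), Set.indicator_of_mem hpS, hf p hp, smul_eq_mul,
        Pi.one_apply, mul_one]
    · rw [Set.indicator_of_notMem (mt (hAS p hp).1 hpS), Set.indicator_of_notMem hpS, smul_zero,
        mul_zero]
  rw [withDensity_apply _ hA, ← lintegral_indicator hA, ← lintegral_comp_polarCoord_symm,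
    setLIntegral_congr_fun polarCoord.open_target.measurableSet hpolar, polarCoord_target,
    Measure.volume_eq_prod, ← Measure.prod_restrict,
    lintegral_prod_mul (f := fun r => ENNReal.ofReal r * g r) (by fun_prop)
      (measurable_one.indicator hS).aemeasurable,
    lintegral_indicator_one hS, Measure.restrict_apply hS]

theorem withDensity_radial_cone [IsProbabilityMeasure (volume.withDensity f)] (hg : Measurable g)
    (hf : ∀ p ∈ polarCoord.target, f (polarCoord.symm p) = g p.1)
    (hA : MeasurableSet A) (hS : MeasurableSet S)
    (hAS : ∀ p ∈ polarCoord.target, polarCoord.symm p ∈ A ↔ p.2 ∈ S) :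
    volume.withDensity f A = volume (S ∩ Set.Ioo (-π) π) / ENNReal.ofReal (2 * π) := by
  have htotal : 1 = (∫⁻ r in Set.Ioi 0, ENNReal.ofReal r * g r) * ENNReal.ofReal (2 * π) := by
    have := withDensity_radial_cone_eq_mul hg hf .univ .univ fun _ _ => by simp only [Set.mem_univ]
    rwa [measure_univ, Set.univ_inter, Real.volume_Ioo, sub_neg_eq_add, ← two_mul] at this
  rw [withDensity_radial_cone_eq_mul hg hf hA hS hAS,
    ENNReal.eq_inv_of_mul_eq_one_left htotal.symm, mul_comm, div_eq_mul_inv]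

theorem gaussianPDF_mul_gaussianPDF_polar (v : ℝ≥0) (r φ : ℝ) :
    gaussianPDF 0 v (r * cos φ) * gaussianPDF 0 v (r * sin φ) =
      gaussianPDF 0 v r * gaussianPDF 0 v 0 := by
  have hexp : rexp (-(r * cos φ) ^ 2 / (2 * v)) * rexp (-(r * sin φ) ^ 2 / (2 * v)) =
      rexp (-r ^ 2 / (2 * v)) * rexp (-0 ^ 2 / (2 * v)) := by
    rw [← exp_add, ← exp_add]
    congr 1
    linear_combination (-r ^ 2 / (2 * v)) * sin_sq_add_cos_sq φ
  simp only [gaussianPDF]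
  rw [← ENNReal.ofReal_mul (gaussianPDFReal_nonneg _ _ _),
    ← ENNReal.ofReal_mul (gaussianPDFReal_nonneg _ _ _)]
  simp only [gaussianPDFReal, sub_zero]
  rw [mul_mul_mul_comm, hexp, mul_mul_mul_comm]

theorem gaussianReal_prod_cone {v : ℝ≥0} (hv : v ≠ 0) (hA : MeasurableSet A) (hS : MeasurableSet S)
    (hAS : ∀ p ∈ polarCoord.target, polarCoord.symm p ∈ A ↔ p.2 ∈ S) :
    (gaussianReal 0 v).prod (gaussianReal 0 v) A =
      volume (S ∩ Set.Ioo (-π) π) / ENNReal.ofReal (2 * π) := by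
  have hm := measurable_gaussianPDF 0 v
  have hdensity : (gaussianReal 0 v).prod (gaussianReal 0 v) =
      volume.withDensity fun p : ℝ × ℝ => gaussianPDF 0 v p.1 * gaussianPDF 0 v p.2 := by
    rw [gaussianReal_of_var_ne_zero _ hv, prod_withDensity hm hm, Measure.volume_eq_prod]
  have : IsProbabilityMeasure
      (volume.withDensity fun p : ℝ × ℝ => gaussianPDF 0 v p.1 * gaussianPDF 0 v p.2) :=
    hdensity ▸ inferInstance
  rw [hdensity]
  exact withDensity_radial_cone (hm.mul_const _)
    (fun p _ => gaussianPDF_mul_gaussianPDF_polar v p.1 p.2) hA hS hAS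

end RadialDensity

section Quadrant

theorem cos_pos_iff_mem_Ioo {φ : ℝ} (hφ : φ ∈ Set.Ioo (-π) π) :
    0 < cos φ ↔ φ ∈ Set.Ioo (-(π / 2)) (π / 2) := by
  refine ⟨fun h => abs_lt.1 ?_, cos_pos_of_mem_Ioo⟩
  by_contra! hle
  have hlt : |φ| < π := abs_lt.2 hφ
  have : cos |φ| ≤ 0 := cos_nonpos_of_pi_div_two_le_of_le hle (by linarith [pi_pos])
  exact this.not_gt (by rwa [cos_abs])

theorem cos_pos_and_cos_sub_neg_iff {θ φ : ℝ} (hθ : θ ∈ Set.Icc 0 π) (hφ : φ ∈ Set.Ioo (-π) π) :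
    0 < cos φ ∧ cos (φ - θ) < 0 ↔ φ ∈ Set.Ioo (-(π / 2)) (θ - π / 2) := by
  obtain ⟨hθ0, hθπ⟩ := hθ
  rw [cos_pos_iff_mem_Ioo hφ]
  constructor
  · rintro ⟨⟨hlo, hhi⟩, hneg⟩
    refine ⟨hlo, not_le.1 fun hle => hneg.not_ge ?_⟩
    exact cos_nonneg_of_mem_Icc ⟨by linarith, by linarith⟩
  · rintro ⟨hlo, hhi⟩
    refine ⟨⟨hlo, by linarith⟩, ?_⟩
    rw [← cos_neg]
    exact cos_neg_of_pi_div_two_lt_of_lt (by linarith) (by linarith)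

theorem stdBivariateGaussian_pos_neg {ρ : ℝ} (hρ : ρ ∈ Set.Icc (-1) 1) :
    stdBivariateGaussian ρ {p | 0 < p.1 ∧ p.2 < 0} = ENNReal.ofReal (arccos ρ / (2 * π)) := by
  have hθ : arccos ρ ∈ Set.Icc 0 π := ⟨arccos_nonneg ρ, arccos_le_pi ρ⟩
  have hquadrant : MeasurableSet {p : ℝ × ℝ | 0 < p.1 ∧ p.2 < 0} := by measurability
  have hT : Measurable fun p : ℝ × ℝ => (p.1, ρ * p.1 + √(1 - ρ ^ 2) * p.2) := by fun_prop
  have hangle : ∀ p ∈ polarCoord.target,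
      polarCoord.symm p ∈ (fun p : ℝ × ℝ => (p.1, ρ * p.1 + √(1 - ρ ^ 2) * p.2)) ⁻¹'
        {p | 0 < p.1 ∧ p.2 < 0} ↔ p.2 ∈ Set.Ioo (-(π / 2)) (arccos ρ - π / 2) := by
    rintro ⟨r, φ⟩ ⟨hr : 0 < r, hφ⟩
    have hrot : ρ * (r * cos φ) + √(1 - ρ ^ 2) * (r * sin φ) = r * cos (φ - arccos ρ) := by
      rw [cos_sub, cos_arccos hρ.1 hρ.2, sin_arccos]
      ring
    rw [← cos_pos_and_cos_sub_neg_iff hθ hφ, Set.mem_preimage, polarCoord_symm_apply, hrot]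
    exact and_congr (mul_pos_iff_of_pos_left hr) (smul_neg_iff_of_pos_left hr)
  have hsubset : Set.Ioo (-(π / 2)) (arccos ρ - π / 2) ⊆ Set.Ioo (-π) π :=
    Set.Ioo_subset_Ioo (by linarith [pi_pos]) (by linarith [pi_pos, hθ.2])
  rw [stdBivariateGaussian, Measure.map_apply hT hquadrant,
    gaussianReal_prod_cone one_ne_zero (hT hquadrant) measurableSet_Ioo hangle,
    Set.inter_eq_left.2 hsubset, Real.volume_Ioo, ← ENNReal.ofReal_div_of_pos (by positivity)]
  congr 2
  ring

theorem stdBivariateGaussian_neg_pos {ρ : ℝ} (hρ : ρ ∈ Set.Icc (-1) 1) :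
    stdBivariateGaussian ρ {p | p.1 < 0 ∧ 0 < p.2} = ENNReal.ofReal (arccos ρ / (2 * π)) := by
  have hquadrant : MeasurableSet {p : ℝ × ℝ | p.1 < 0 ∧ 0 < p.2} := by measurability
  have hreflect : (fun p : ℝ × ℝ => -p) ⁻¹' {p | p.1 < 0 ∧ 0 < p.2} = {p | 0 < p.1 ∧ p.2 < 0} := by
    ext p
    simp
  rw [← map_neg_stdBivariateGaussian, Measure.map_apply measurable_neg hquadrant, hreflect,
    stdBivariateGaussian_pos_neg hρ]

theorem stdBivariateGaussian_mul_neg {ρ : ℝ} (hρ : ρ ∈ Set.Icc (-1) 1) :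
    stdBivariateGaussian ρ {p | p.1 * p.2 < 0} = ENNReal.ofReal (arccos ρ / π) := by
  have hquadrants : {p : ℝ × ℝ | p.1 * p.2 < 0} =
      {p | 0 < p.1 ∧ p.2 < 0} ∪ {p | p.1 < 0 ∧ 0 < p.2} := by
    ext p
    exact mul_neg_iff (a := p.1)
  have hdisjoint : Disjoint {p : ℝ × ℝ | 0 < p.1 ∧ p.2 < 0} {p | p.1 < 0 ∧ 0 < p.2} :=
    Set.disjoint_left.2 fun p hpos hneg => hpos.1.not_gt hneg.1
  have hnonneg : 0 ≤ arccos ρ / (2 * π) := div_nonneg (arccos_nonneg ρ) (by positivity)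
  rw [hquadrants, measure_union hdisjoint (by measurability), stdBivariateGaussian_pos_neg hρ,
    stdBivariateGaussian_neg_pos hρ, ← ENNReal.ofReal_add hnonneg hnonneg]
  congr 1
  ring

end Quadrant

/-- For a mean-zero bivariate Gaussian vector (X, Y) with unit variances and
correlation ρ ∈ [-1, 1], we have P(XY < 0) = arccos(ρ)/π. Joint Gaussianity is encoded by
requiring every linear combination a·X + b·Y to be Gaussian with mean 0 and variance
a² + 2abρ + b². -/
theorem prob_product_neg_standardized_gaussian
    {Ω : Type*} [MeasureSpace Ω] [IsProbabilityMeasure (ℙ : Measure Ω)]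
    (X Y : Ω → ℝ) (hXm : Measurable X) (hYm : Measurable Y)
    (ρ : ℝ) (hρ : ρ ∈ Set.Icc (-1 : ℝ) 1)
    (hGauss : ∀ a b : ℝ,
      Measure.map (fun ω => a * X ω + b * Y ω) ℙ =
        gaussianReal 0 (a ^ 2 + 2 * a * b * ρ + b ^ 2).toNNReal) :
    ℙ {ω | X ω * Y ω < 0} = ENNReal.ofReal (Real.arccos ρ / π) := by
  have hXY : Measurable fun ω => (X ω, Y ω) := hXm.prodMk hYm
  have hlaw : (ℙ : Measure Ω).map (fun ω => (X ω, Y ω)) = stdBivariateGaussian ρ := by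
    refine eq_stdBivariateGaussian_of_map_linear hρ fun a b => ?_
    rw [Measure.map_map (by fun_prop) hXY]
    exact hGauss a b
  have hmeas : MeasurableSet {p : ℝ × ℝ | p.1 * p.2 < 0} := by measurability
  rw [← stdBivariateGaussian_mul_neg hρ, ← hlaw, Measure.map_apply hXY hmeas]
  rfl
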